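/- Suppose A and B are nonempty closed convex subsets of X whose relative interiors intersect (i.e., the intrinsic interior of A meets the intrinsic interior of B), and let S := aff(A ∪ B) be the affine span of A ∪ B. Let (λ_n) and (μ_n) be nonincreasing sequences in (0,1] with limits λ_∞ and μ_∞ satisfying 1 > max{λ_0, μ_0} ≥ min{λ_∞, μ_∞} > 0, and let y_{−1} ∈ S. Then there exists ρ ∈ (0,1) such that the MARP sequences (x_n) and (y_n) with starting point y_{−1} converge linearly with rate ρ to some point of A ∩ B. -/

import Mathlib

open Filter Topology

/-- The set of nearest points of `u` in `C`. -/
def projSet {X : Type*} [NormedAddCommGroup X] (C : Set X) (u : X) : Set X :=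
  {c ∈ C | ‖u - c‖ = Metric.infDist u C}

/-- MARP sequences: here `Y n` denotes `y_{n-1}`, so `Y 0 = y_{-1}` is the starting
point and `Y (n+1) = y_n`. -/
def IsMARP {X : Type*} [NormedAddCommGroup X] [NormedSpace ℝ X]
    (A B : Set X) (lam mu : ℕ → ℝ) (a x b Y : ℕ → X) : Prop :=
  ∀ n : ℕ, a n ∈ projSet A (Y n) ∧ x n = (1 - lam n) • Y n + lam n • a n ∧
    b n ∈ projSet B (x n) ∧ Y (n + 1) = (1 - mu n) • x n + mu n • b n

/-!
Each cycle decreases the squared distance to every point of `A ∩ B` by a fixed multiple of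
`‖Y n - a n‖ ^ 2 + ‖x n - b n‖ ^ 2`. If `A` and `B` are boundedly linearly regular, this sum
dominates a fixed multiple of the squared distance from `Y n` to `A ∩ B`, which therefore decays
geometrically; since `Y` is Fejér monotone, that distance controls the distance to the limit.

Regularity comes from a common relative interior point `c`: the open mapping theorem gives a common
perturbation `a + u = b + v` of `a ∈ A` and `b ∈ B`, with `u` and `v` along the two affine spans and
of size `O(‖a - b‖)`, and a slight homothety towards `c` moves this point into `A ∩ B`.
-/

section FejerMonotone

variable {α : Type*} [PseudoMetricSpace α] {C : Set α} {y : ℕ → α}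

/-- Fejér monotonicity of the sequence `y` with respect to `C`: the distance to each point of `C`
never increases along `y`. -/
def IsFejerMonotone (C : Set α) (y : ℕ → α) : Prop :=
  ∀ z ∈ C, Antitone fun n => dist (y n) z

theorem IsFejerMonotone.dist_le_two_mul_infDist (hy : IsFejerMonotone C y) (hC : C.Nonempty)
    {n m : ℕ} (hnm : n ≤ m) : dist (y n) (y m) ≤ 2 * Metric.infDist (y n) C := by
  have half_le : dist (y n) (y m) / 2 ≤ Metric.infDist (y n) C :=
    (Metric.le_infDist hC).2 fun z hz => by
      linarith [dist_triangle_right (y n) (y m) z, hy z hz hnm]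
  linarith

theorem IsFejerMonotone.isBounded_range (hy : IsFejerMonotone C y) (hC : C.Nonempty) :
    Bornology.IsBounded (Set.range y) := by
  obtain ⟨z, hz⟩ := hC
  exact (Metric.isBounded_closedBall (x := z) (r := dist (y 0) z)).subset
    (Set.range_subset_iff.2 fun n => hy z hz n.zero_le)

theorem IsFejerMonotone.exists_mem_forall_dist_le [CompleteSpace α] (hy : IsFejerMonotone C y)
    (hC : C.Nonempty) (hCclosed : IsClosed C)
    (hlim : Tendsto (fun n => Metric.infDist (y n) C) atTop (𝓝 0)) :
    ∃ w ∈ C, ∀ n, dist (y n) w ≤ 2 * Metric.infDist (y n) C := by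
  have hcauchy : CauchySeq y :=
    cauchySeq_of_le_tendsto_0' _ (fun _ _ => hy.dist_le_two_mul_infDist hC)
      (by simpa only [mul_zero] using hlim.const_mul 2)
  obtain ⟨w, hw⟩ := cauchySeq_tendsto_of_complete hcauchy
  have hw_infDist : Metric.infDist w C = 0 :=
    tendsto_nhds_unique (((Metric.continuous_infDist_pt C).tendsto w).comp hw) hlim
  refine ⟨w, (hCclosed.mem_iff_infDist_zero hC).2 hw_infDist, fun n => ?_⟩
  refine le_of_tendsto (tendsto_const_nhds.dist hw) ?_
  filter_upwards [eventually_ge_atTop n] with m hnm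
  exact hy.dist_le_two_mul_infDist hC hnm

theorem infDist_le_sqrt_mul_infDist {p q : α} {η : ℝ} (hC : C.Nonempty) (hη : η ≤ 1)
    (h : ∀ z ∈ C, dist q z ^ 2 ≤ dist p z ^ 2 - η * Metric.infDist p C ^ 2) :
    Metric.infDist q C ≤ √(1 - η) * Metric.infDist p C := by
  have sqrt_le : √(Metric.infDist q C ^ 2 + η * Metric.infDist p C ^ 2) ≤ Metric.infDist p C := by
    refine (Metric.le_infDist hC).2 fun z hz => Real.sqrt_le_iff.2 ⟨dist_nonneg, ?_⟩
    have hq : Metric.infDist q C ^ 2 ≤ dist q z ^ 2 :=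
      pow_le_pow_left₀ Metric.infDist_nonneg (Metric.infDist_le_dist_of_mem hz) 2
    linarith [h z hz]
  refine le_of_sq_le_sq ?_ (mul_nonneg (Real.sqrt_nonneg _) Metric.infDist_nonneg)
  rw [mul_pow, Real.sq_sqrt (sub_nonneg.2 hη)]
  linarith [(Real.sqrt_le_iff.1 sqrt_le).2]

theorem exists_mem_forall_dist_le_mul_pow [CompleteSpace α] {η : ℝ} (hC : C.Nonempty)
    (hCclosed : IsClosed C) (hη : η ∈ Set.Ioc 0 1)
    (h : ∀ n, ∀ z ∈ C, dist (y (n + 1)) z ^ 2 ≤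
      dist (y n) z ^ 2 - η * Metric.infDist (y n) C ^ 2) :
    ∃ w ∈ C, ∀ n, dist (y n) w ≤ 2 * Metric.infDist (y 0) C * √(1 - η) ^ n := by
  have hfejer : IsFejerMonotone C y := fun z hz => antitone_nat_of_succ_le fun n =>
    le_of_sq_le_sq ((h n z hz).trans (sub_le_self _ (mul_nonneg hη.1.le (sq_nonneg _)))) dist_nonneg
  have hgeom (n : ℕ) : Metric.infDist (y n) C ≤ √(1 - η) ^ n * Metric.infDist (y 0) C :=
    le_geom (u := fun k => Metric.infDist (y k) C) (Real.sqrt_nonneg _) n fun k _ =>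
      infDist_le_sqrt_mul_infDist hC hη.2 (h k)
  have hrate : √(1 - η) < 1 := (Real.sqrt_lt' one_pos).2 (by linarith [hη.1])
  have hlim : Tendsto (fun n => Metric.infDist (y n) C) atTop (𝓝 0) :=
    squeeze_zero (fun _ => Metric.infDist_nonneg) hgeom <| by
      simpa only [zero_mul] using
        (tendsto_pow_atTop_nhds_zero_of_lt_one (Real.sqrt_nonneg _) hrate).mul_const _
  obtain ⟨w, hwC, hw⟩ := hfejer.exists_mem_forall_dist_le hC hCclosed hlim
  exact ⟨w, hwC, fun n => (hw n).trans (by linarith [hgeom n])⟩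

end FejerMonotone

section RelativeInterior

variable {E : Type*} [NormedAddCommGroup E] [NormedSpace ℝ E] {A : Set E} {c : E}

theorem exists_forall_add_mem_of_mem_intrinsicInterior (hc : c ∈ intrinsicInterior ℝ A) :
    ∃ r > 0, ∀ u ∈ (affineSpan ℝ A).direction, ‖u‖ ≤ r → c + u ∈ A := by
  obtain ⟨c, hc_interior, rfl⟩ := mem_intrinsicInterior.1 hc
  obtain ⟨r, hr, hball⟩ :=
    Metric.nhds_basis_closedBall.mem_iff.1 (mem_interior_iff_mem_nhds.1 hc_interior)
  refine ⟨r, hr, fun u hu hur => ?_⟩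
  have hspan : (c : E) + u ∈ affineSpan ℝ A := by
    simpa only [vadd_eq_add, add_comm] using AffineSubspace.vadd_mem_of_mem_direction hu c.2
  have hmem : (⟨(c : E) + u, hspan⟩ : affineSpan ℝ A) ∈ Metric.closedBall c r := by
    simpa only [Metric.mem_closedBall, Subtype.dist_eq, dist_self_add_left] using hur
  exact hball hmem

theorem isClosed_direction_affineSpan_of_mem_intrinsicInterior (hA : IsClosed A)
    (hc : c ∈ intrinsicInterior ℝ A) : IsClosed ((affineSpan ℝ A).direction : Set E) := by
  obtain ⟨r, hr, hball⟩ := exists_forall_add_mem_of_mem_intrinsicInterior hc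
  set U := (affineSpan ℝ A).direction
  have mem_of_norm_lt {u : E} (hu : u ∈ closure (U : Set E)) (hur : ‖u‖ < r) : u ∈ U := by
    have hcu : c + u ∈ A := by
      have hmaps : Set.MapsTo (c + ·) (Metric.ball 0 r ∩ U) A := fun v hv =>
        hball v hv.2 (mem_ball_zero_iff.1 hv.1).le
      refine hA.closure_eq ▸ hmaps.closure (continuous_const_add c) ?_
      exact Metric.isOpen_ball.inter_closure ⟨mem_ball_zero_iff.2 hur, hu⟩
    simpa only [vsub_eq_sub, add_sub_cancel_left] using
      AffineSubspace.vsub_mem_direction (subset_affineSpan ℝ A hcu)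
        (subset_affineSpan ℝ A (intrinsicInterior_subset hc))
  refine isClosed_of_closure_subset fun u hu => ?_
  obtain ⟨t, ht, htu⟩ := exists_pos_mul_lt hr ‖u‖
  refine (U.smul_mem_iff ht.ne').1 (mem_of_norm_lt ?_ ?_)
  · exact U.topologicalClosure.smul_mem t hu
  · rwa [norm_smul, Real.norm_of_nonneg ht.le, mul_comm]

end RelativeInterior

theorem exists_add_eq_norm_le_of_isClosed_sup {𝕜 E : Type*} [NontriviallyNormedField 𝕜]
    [NormedAddCommGroup E] [NormedSpace 𝕜 E] [CompleteSpace E] {U V : Submodule 𝕜 E}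
    (hU : IsClosed (U : Set E)) (hV : IsClosed (V : Set E))
    (hUV : IsClosed ((U ⊔ V : Submodule 𝕜 E) : Set E)) :
    ∃ K > 0, ∀ w ∈ U ⊔ V, ∃ u ∈ U, ∃ v ∈ V, u + v = w ∧ ‖u‖ ≤ K * ‖w‖ ∧ ‖v‖ ≤ K * ‖w‖ := by
  have := hU.completeSpace_coe
  have := hV.completeSpace_coe
  have := hUV.completeSpace_coe
  let sum : U × V →L[𝕜] (U ⊔ V : Submodule 𝕜 E) :=
    (U.subtypeL.coprod V.subtypeL).codRestrict _ fun p => Submodule.add_mem_sup p.1.2 p.2.2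
  have sum_surjective : Function.Surjective sum := by
    rintro ⟨w, hw⟩
    obtain ⟨u, hu, v, hv, rfl⟩ := Submodule.mem_sup.1 hw
    exact ⟨(⟨u, hu⟩, ⟨v, hv⟩), rfl⟩
  obtain ⟨K, hK, hpreimage⟩ := sum.exists_preimage_norm_le sum_surjective
  refine ⟨K, hK, fun w hw => ?_⟩
  obtain ⟨p, hp, hpK⟩ := hpreimage ⟨w, hw⟩
  exact ⟨p.1, p.1.2, p.2, p.2.2, congrArg Subtype.val hp,
    (norm_fst_le p).trans hpK, (norm_snd_le p).trans hpK⟩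

section LinearRegularity

/-- Bounded linear regularity of the pair `(A, B)` in the sense of Bauschke and Borwein: on bounded
sets, the distance to `A ∩ B` is at most a multiple of the larger of the distances to `A` and `B`.
Meaningful only when `A ∩ B` is nonempty, since `Metric.infDist x ∅ = 0`. -/
def IsBoundedlyLinearlyRegular {α : Type*} [PseudoMetricSpace α] (A B : Set α) : Prop :=
  ∀ s : Set α, Bornology.IsBounded s → ∃ κ ≥ 0, ∀ x ∈ s,
    Metric.infDist x (A ∩ B) ≤ κ * max (Metric.infDist x A) (Metric.infDist x B)

theorem homothety_add_mem_of_convex {E : Type*} [AddCommGroup E] [Module ℝ E] {A : Set E}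
    (hA : Convex ℝ A) {a c u : E} {r D : ℝ} (hr : 0 < r) (hD : 0 < D) (ha : a ∈ A)
    (hcu : c + (r / D) • u ∈ A) : AffineMap.homothety c (r / (r + D)) (a + u) ∈ A := by
  have hcombo := hA ha hcu (a := r / (r + D)) (b := D / (r + D)) (by positivity) (by positivity)
    (by field_simp)
  convert hcombo using 1
  rw [AffineMap.homothety_apply, vsub_eq_sub, vadd_eq_add]
  match_scalars <;> field_simp
  ring

theorem dist_homothety_add_le {E : Type*} [NormedAddCommGroup E] [NormedSpace ℝ E] {a c u : E}
    {r D : ℝ} (hr : 0 < r) (hD : 0 < D) (hu : ‖u‖ ≤ D) :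
    dist a (AffineMap.homothety c (r / (r + D)) (a + u)) ≤ D * (dist a c / r + 1) := by
  have hsub : a - AffineMap.homothety c (r / (r + D)) (a + u) =
      (D / (r + D)) • (a - c) - (r / (r + D)) • u := by
    rw [AffineMap.homothety_apply, vsub_eq_sub, vadd_eq_add]
    match_scalars <;> field_simp <;> ring
  calc dist a (AffineMap.homothety c (r / (r + D)) (a + u))
      ≤ ‖(D / (r + D)) • (a - c)‖ + ‖(r / (r + D)) • u‖ := by
        rw [dist_eq_norm, hsub]
        exact norm_sub_le _ _
    _ = D / (r + D) * dist a c + r / (r + D) * ‖u‖ := by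
        rw [norm_smul, norm_smul, Real.norm_of_nonneg (by positivity),
          Real.norm_of_nonneg (by positivity), dist_eq_norm]
    _ ≤ D / r * dist a c + 1 * D := by
        gcongr
        · linarith
        · exact div_le_one_of_le₀ (by linarith) (by positivity)
    _ = D * (dist a c / r + 1) := by ring

variable {E : Type*} [NormedAddCommGroup E]

theorem infDist_inter_le_of_add_eq_add [NormedSpace ℝ E] {A B : Set E} (hA : Convex ℝ A)
    (hB : Convex ℝ B) {U V : Submodule ℝ E} {a b c u v : E} {r D : ℝ} (hr : 0 < r) (hD : 0 < D)
    (hcA : ∀ w ∈ U, ‖w‖ ≤ r → c + w ∈ A) (hcB : ∀ w ∈ V, ‖w‖ ≤ r → c + w ∈ B)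
    (ha : a ∈ A) (hb : b ∈ B) (hu : u ∈ U) (hv : v ∈ V) (huv : a + u = b + v)
    (huD : ‖u‖ ≤ D) (hvD : ‖v‖ ≤ D) :
    Metric.infDist a (A ∩ B) ≤ D * (dist a c / r + 1) := by
  have norm_scaled_le {w : E} (hw : ‖w‖ ≤ D) : ‖(r / D) • w‖ ≤ r := by
    rw [norm_smul, Real.norm_of_nonneg (by positivity)]
    calc r / D * ‖w‖ ≤ r / D * D := by gcongr
      _ = r := div_mul_cancel₀ r hD.ne'
  have hzA : AffineMap.homothety c (r / (r + D)) (a + u) ∈ A :=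
    homothety_add_mem_of_convex hA hr hD ha (hcA _ (U.smul_mem _ hu) (norm_scaled_le huD))
  have hzB : AffineMap.homothety c (r / (r + D)) (a + u) ∈ B := huv ▸
    homothety_add_mem_of_convex hB hr hD hb (hcB _ (V.smul_mem _ hv) (norm_scaled_le hvD))
  exact (Metric.infDist_le_dist_of_mem (Set.mem_inter hzA hzB)).trans
    (dist_homothety_add_le hr hD huD)

theorem exists_infDist_inter_le_mul_dist [NormedSpace ℝ E] [CompleteSpace E] {A B : Set E} {c : E}
    (hAclosed : IsClosed A) (hA : Convex ℝ A) (hBclosed : IsClosed B) (hB : Convex ℝ B)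
    (hcA : c ∈ intrinsicInterior ℝ A) (hcB : c ∈ intrinsicInterior ℝ B)
    (hspan : IsClosed (affineSpan ℝ (A ∪ B) : Set E)) :
    ∃ K > 0, ∃ r > 0, ∀ a ∈ A, ∀ b ∈ B,
      Metric.infDist a (A ∩ B) ≤ K * (dist a c / r + 1) * dist a b := by
  have hcA_span := subset_affineSpan ℝ A (intrinsicInterior_subset hcA)
  have hcB_span := subset_affineSpan ℝ B (intrinsicInterior_subset hcB)
  obtain ⟨rA, hrA, hballA⟩ := exists_forall_add_mem_of_mem_intrinsicInterior hcA
  obtain ⟨rB, hrB, hballB⟩ := exists_forall_add_mem_of_mem_intrinsicInterior hcB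
  have hsup : IsClosed
      (((affineSpan ℝ A).direction ⊔ (affineSpan ℝ B).direction : Submodule ℝ E) : Set E) := by
    rwa [← AffineSubspace.direction_sup_eq_sup_direction hcA_span hcB_span,
      ← AffineSubspace.span_union, AffineSubspace.isClosed_direction_iff]
  obtain ⟨K, hK, hdecomp⟩ := exists_add_eq_norm_le_of_isClosed_sup
    (isClosed_direction_affineSpan_of_mem_intrinsicInterior hAclosed hcA)
    (isClosed_direction_affineSpan_of_mem_intrinsicInterior hBclosed hcB) hsup
  refine ⟨K, hK, min rA rB, lt_min hrA hrB, fun a ha b hb => ?_⟩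
  obtain rfl | hab := eq_or_ne a b
  · simp [Metric.infDist_zero_of_mem (show a ∈ A ∩ B from ⟨ha, hb⟩)]
  have hba : b - a ∈ (affineSpan ℝ A).direction ⊔ (affineSpan ℝ B).direction := by
    rw [← sub_sub_sub_cancel_right b a c, sub_eq_neg_add]
    exact Submodule.add_mem_sup
      (neg_mem (AffineSubspace.vsub_mem_direction (subset_affineSpan ℝ A ha) hcA_span))
      (AffineSubspace.vsub_mem_direction (subset_affineSpan ℝ B hb) hcB_span)
  obtain ⟨u, hu, v, hv, huv, hunorm, hvnorm⟩ := hdecomp (b - a) hba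
  rw [← dist_eq_norm, dist_comm] at hunorm hvnorm
  have hbound := infDist_inter_le_of_add_eq_add hA hB (lt_min hrA hrB)
    (mul_pos hK (dist_pos.2 hab)) (fun w hw hwr => hballA w hw (hwr.trans (min_le_left _ _)))
    (fun w hw hwr => hballB w hw (hwr.trans (min_le_right _ _))) ha hb hu (neg_mem hv)
    (by rw [← sub_eq_add_neg, eq_sub_iff_add_eq, add_assoc, huv, add_sub_cancel])
    hunorm ((norm_neg v).trans_le hvnorm)
  linarith

end LinearRegularity

section Projection

variable {X : Type*} [NormedAddCommGroup X] [InnerProductSpace ℝ X] {A B : Set X}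

theorem projSet_nonempty [CompleteSpace X] (hAne : A.Nonempty) (hAclosed : IsClosed A)
    (hA : Convex ℝ A) (y : X) : (projSet A y).Nonempty := by
  obtain ⟨a, ha, hya⟩ := exists_norm_eq_iInf_of_complete_convex hAne hAclosed.isComplete hA y
  exact ⟨a, ha, by simpa only [Metric.infDist_eq_iInf, dist_eq_norm] using hya⟩

theorem inner_sub_le_zero_of_mem_projSet (hA : Convex ℝ A) {y a c : X} (ha : a ∈ projSet A y)
    (hc : c ∈ A) : inner ℝ (y - a) (c - a) ≤ 0 := by
  refine (norm_eq_iInf_iff_real_inner_le_zero hA ha.1).1 ?_ c hc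
  simpa only [Metric.infDist_eq_iInf, dist_eq_norm] using ha.2

theorem norm_relaxed_sub_sq_le (hA : Convex ℝ A) {y a c : X} {t ε : ℝ} (ha : a ∈ projSet A y)
    (hc : c ∈ A) (hε : 0 ≤ ε) (ht : t ∈ Set.Icc ε (2 - ε)) :
    ‖(1 - t) • y + t • a - c‖ ^ 2 ≤ ‖y - c‖ ^ 2 - ε * (2 - ε) * ‖y - a‖ ^ 2 := by
  have hexpand : ‖(1 - t) • y + t • a - c‖ ^ 2 =
      ‖y - c‖ ^ 2 - t * (2 - t) * ‖y - a‖ ^ 2 + 2 * t * inner ℝ (y - a) (c - a) := by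
    have hvec : (1 - t) • y + t • a - c = (y - c) - t • (y - a) := by module
    have hinner : inner ℝ (y - c) (y - a) = ‖y - a‖ ^ 2 - inner ℝ (y - a) (c - a) := by
      rw [← sub_sub_sub_cancel_right y c a, inner_sub_left, real_inner_self_eq_norm_sq,
        real_inner_comm]
    rw [hvec, norm_sub_sq_real, inner_smul_right, hinner, norm_smul, mul_pow, Real.norm_eq_abs,
      sq_abs]
    ring
  have hcoeff : ε * (2 - ε) ≤ t * (2 - t) := by
    linarith [mul_nonneg (sub_nonneg.2 ht.1) (sub_nonneg.2 ht.2)]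
  have hobtuse : t * inner ℝ (y - a) (c - a) ≤ 0 :=
    mul_nonpos_of_nonneg_of_nonpos (hε.trans ht.1) (inner_sub_le_zero_of_mem_projSet hA ha hc)
  linarith [mul_le_mul_of_nonneg_right hcoeff (sq_nonneg ‖y - a‖)]

theorem isBoundedlyLinearlyRegular_of_intrinsicInterior_inter [CompleteSpace X]
    (hAclosed : IsClosed A) (hA : Convex ℝ A) (hBclosed : IsClosed B) (hB : Convex ℝ B)
    (hri : (intrinsicInterior ℝ A ∩ intrinsicInterior ℝ B).Nonempty)
    (hspan : IsClosed (affineSpan ℝ (A ∪ B) : Set X)) : IsBoundedlyLinearlyRegular A B := by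
  obtain ⟨c, hcA, hcB⟩ := hri
  obtain ⟨K, hK, r, hr, hreg⟩ :=
    exists_infDist_inter_le_mul_dist hAclosed hA hBclosed hB hcA hcB hspan
  intro s hs
  obtain ⟨R, hR, hsR⟩ := hs.subset_closedBall_lt 0 c
  refine ⟨1 + 2 * (K * (2 * R / r + 1)), by positivity, fun x hx => ?_⟩
  obtain ⟨a, ha, hxa⟩ := projSet_nonempty ⟨c, intrinsicInterior_subset hcA⟩ hAclosed hA x
  obtain ⟨b, hb, hxb⟩ := projSet_nonempty ⟨c, intrinsicInterior_subset hcB⟩ hBclosed hB x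
  rw [← dist_eq_norm] at hxa hxb
  have hac : dist a c ≤ 2 * R := by
    have hxaxc := Metric.infDist_le_dist_of_mem (x := x) (intrinsicInterior_subset hcA)
    linarith [dist_triangle_left a c x, Metric.mem_closedBall.1 (hsR hx)]
  set m := max (Metric.infDist x A) (Metric.infDist x B)
  have hxam : dist x a ≤ m := hxa.trans_le (le_max_left _ _)
  have hxbm : dist x b ≤ m := hxb.trans_le (le_max_right _ _)
  calc Metric.infDist x (A ∩ B) ≤ Metric.infDist a (A ∩ B) + dist x a :=
        Metric.infDist_le_infDist_add_dist
    _ ≤ K * (dist a c / r + 1) * dist a b + dist x a := by gcongr; exact hreg a ha b hb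
    _ ≤ K * (2 * R / r + 1) * (m + m) + m := by
        gcongr
        exact (dist_triangle_left a b x).trans (add_le_add hxam hxbm)
    _ = (1 + 2 * (K * (2 * R / r + 1))) * m := by ring

end Projection

namespace IsMARP

section NormedSpace

variable {X : Type*} [NormedAddCommGroup X] [NormedSpace ℝ X] {A B : Set X}
  {lam mu : ℕ → ℝ} {a x b Y : ℕ → X}

theorem max_infDist_le (h : IsMARP A B lam mu a x b Y) {n : ℕ} (hlam : lam n ∈ Set.Icc 0 2) :
    max (Metric.infDist (Y n) A) (Metric.infDist (Y n) B) ≤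
      2 * ‖Y n - a n‖ + ‖x n - b n‖ := by
  obtain ⟨ha, hx, hb, -⟩ := h n
  have hYx : ‖Y n - x n‖ ≤ 2 * ‖Y n - a n‖ := by
    have hvec : Y n - x n = lam n • (Y n - a n) := by rw [hx]; module
    rw [hvec, norm_smul, Real.norm_of_nonneg hlam.1]
    gcongr
    exact hlam.2
  refine max_le ?_ ?_
  · linarith [ha.2, norm_nonneg (Y n - a n), norm_nonneg (x n - b n)]
  · calc Metric.infDist (Y n) B ≤ ‖Y n - b n‖ :=
          (Metric.infDist_le_dist_of_mem hb.1).trans_eq (dist_eq_norm _ _)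
      _ ≤ ‖Y n - x n‖ + ‖x n - b n‖ := norm_sub_le_norm_sub_add_norm_sub _ _ _
      _ ≤ 2 * ‖Y n - a n‖ + ‖x n - b n‖ := by gcongr

theorem infDist_inter_sq_le (h : IsMARP A B lam mu a x b Y) {n : ℕ} {κ : ℝ} (hκ : 0 ≤ κ)
    (hlam : lam n ∈ Set.Icc 0 2)
    (hreg : Metric.infDist (Y n) (A ∩ B) ≤
      κ * max (Metric.infDist (Y n) A) (Metric.infDist (Y n) B)) :
    Metric.infDist (Y n) (A ∩ B) ^ 2 ≤ 5 * κ ^ 2 * (‖Y n - a n‖ ^ 2 + ‖x n - b n‖ ^ 2) := by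
  have hlinear : Metric.infDist (Y n) (A ∩ B) ≤ κ * (2 * ‖Y n - a n‖ + ‖x n - b n‖) :=
    hreg.trans (mul_le_mul_of_nonneg_left (h.max_infDist_le hlam) hκ)
  have hcauchy_schwarz : (2 * ‖Y n - a n‖ + ‖x n - b n‖) ^ 2 ≤
      5 * (‖Y n - a n‖ ^ 2 + ‖x n - b n‖ ^ 2) := by
    linarith [sq_nonneg (‖Y n - a n‖ - 2 * ‖x n - b n‖)]
  calc Metric.infDist (Y n) (A ∩ B) ^ 2
      ≤ (κ * (2 * ‖Y n - a n‖ + ‖x n - b n‖)) ^ 2 :=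
        pow_le_pow_left₀ Metric.infDist_nonneg hlinear 2
    _ = κ ^ 2 * (2 * ‖Y n - a n‖ + ‖x n - b n‖) ^ 2 := mul_pow _ _ _
    _ ≤ κ ^ 2 * (5 * (‖Y n - a n‖ ^ 2 + ‖x n - b n‖ ^ 2)) := by gcongr
    _ = 5 * κ ^ 2 * (‖Y n - a n‖ ^ 2 + ‖x n - b n‖ ^ 2) := by ring

end NormedSpace

variable {X : Type*} [NormedAddCommGroup X] [InnerProductSpace ℝ X] {A B : Set X}
  {lam mu : ℕ → ℝ} {a x b Y : ℕ → X} {ε : ℝ}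

theorem norm_x_sub_sq_le (h : IsMARP A B lam mu a x b Y) (hA : Convex ℝ A) (hε : 0 ≤ ε)
    (hlam : ∀ n, lam n ∈ Set.Icc ε (2 - ε)) (n : ℕ) {z : X} (hz : z ∈ A) :
    ‖x n - z‖ ^ 2 ≤ ‖Y n - z‖ ^ 2 - ε * (2 - ε) * ‖Y n - a n‖ ^ 2 := by
  obtain ⟨ha, hx, -, -⟩ := h n
  exact hx ▸ norm_relaxed_sub_sq_le hA ha hz hε (hlam n)

theorem norm_Y_succ_sub_sq_le (h : IsMARP A B lam mu a x b Y) (hB : Convex ℝ B) (hε : 0 ≤ ε)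
    (hmu : ∀ n, mu n ∈ Set.Icc ε (2 - ε)) (n : ℕ) {z : X} (hz : z ∈ B) :
    ‖Y (n + 1) - z‖ ^ 2 ≤ ‖x n - z‖ ^ 2 - ε * (2 - ε) * ‖x n - b n‖ ^ 2 := by
  obtain ⟨-, -, hb, hY⟩ := h n
  exact hY ▸ norm_relaxed_sub_sq_le hB hb hz hε (hmu n)

theorem norm_Y_succ_sub_sq_le_of_mem_inter (h : IsMARP A B lam mu a x b Y) (hA : Convex ℝ A)
    (hB : Convex ℝ B) (hε : 0 ≤ ε) (hlam : ∀ n, lam n ∈ Set.Icc ε (2 - ε))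
    (hmu : ∀ n, mu n ∈ Set.Icc ε (2 - ε)) (n : ℕ) {z : X} (hz : z ∈ A ∩ B) :
    ‖Y (n + 1) - z‖ ^ 2 ≤
      ‖Y n - z‖ ^ 2 - ε * (2 - ε) * (‖Y n - a n‖ ^ 2 + ‖x n - b n‖ ^ 2) := by
  linarith [h.norm_x_sub_sq_le hA hε hlam n hz.1, h.norm_Y_succ_sub_sq_le hB hε hmu n hz.2]

theorem norm_x_sub_le (h : IsMARP A B lam mu a x b Y) (hA : Convex ℝ A) (hε : 0 ≤ ε)
    (hlam : ∀ n, lam n ∈ Set.Icc ε (2 - ε)) (n : ℕ) {z : X} (hz : z ∈ A) :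
    ‖x n - z‖ ≤ ‖Y n - z‖ := by
  have hε2 : 0 ≤ 2 - ε := hε.trans ((hlam n).1.trans (hlam n).2)
  exact le_of_sq_le_sq ((h.norm_x_sub_sq_le hA hε hlam n hz).trans
    (sub_le_self _ (by positivity))) (norm_nonneg _)

theorem isFejerMonotone (h : IsMARP A B lam mu a x b Y) (hA : Convex ℝ A) (hB : Convex ℝ B)
    (hε : 0 ≤ ε) (hlam : ∀ n, lam n ∈ Set.Icc ε (2 - ε)) (hmu : ∀ n, mu n ∈ Set.Icc ε (2 - ε)) :
    IsFejerMonotone (A ∩ B) Y := by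
  have hε2 : 0 ≤ 2 - ε := hε.trans ((hlam 0).1.trans (hlam 0).2)
  refine fun z hz => antitone_nat_of_succ_le fun n => ?_
  rw [dist_eq_norm, dist_eq_norm]
  exact le_of_sq_le_sq ((h.norm_Y_succ_sub_sq_le_of_mem_inter hA hB hε hlam hmu n hz).trans
    (sub_le_self _ (by positivity))) (norm_nonneg _)

theorem exists_sq_dist_decrease (h : IsMARP A B lam mu a x b Y) (hA : Convex ℝ A)
    (hB : Convex ℝ B) (hC : (A ∩ B).Nonempty) (hreg : IsBoundedlyLinearlyRegular A B)
    (hε : 0 < ε) (hlam : ∀ n, lam n ∈ Set.Icc ε (2 - ε))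
    (hmu : ∀ n, mu n ∈ Set.Icc ε (2 - ε)) :
    ∃ η ∈ Set.Ioo (0 : ℝ) 1, ∀ n, ∀ z ∈ A ∩ B,
      dist (Y (n + 1)) z ^ 2 ≤ dist (Y n) z ^ 2 - η * Metric.infDist (Y n) (A ∩ B) ^ 2 := by
  obtain ⟨κ, hκ, hκY⟩ := hreg (Set.range Y)
    ((h.isFejerMonotone hA hB hε.le hlam hmu).isBounded_range hC)
  have hε2 : 0 < 2 - ε := hε.trans_le ((hlam 0).1.trans (hlam 0).2)
  have hε_le_one : ε * (2 - ε) ≤ 1 := by linarith [sq_nonneg (1 - ε)]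
  refine ⟨ε * (2 - ε) / (5 * κ ^ 2 + 2), ⟨by positivity, ?_⟩, fun n z hz => ?_⟩
  · rw [div_lt_one (by positivity)]
    linarith [sq_nonneg κ]
  have hlam02 : lam n ∈ Set.Icc 0 2 := Set.Icc_subset_Icc hε.le (by linarith) (hlam n)
  have hinfDist := h.infDist_inter_sq_le hκ hlam02 (hκY _ (Set.mem_range_self n))
  have hcycle := h.norm_Y_succ_sub_sq_le_of_mem_inter hA hB hε.le hlam hmu n hz
  set residual := ‖Y n - a n‖ ^ 2 + ‖x n - b n‖ ^ 2
  have hresidual_nonneg : 0 ≤ residual := by positivity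
  have hdecrease : ε * (2 - ε) / (5 * κ ^ 2 + 2) * Metric.infDist (Y n) (A ∩ B) ^ 2 ≤
      ε * (2 - ε) * residual :=
    calc ε * (2 - ε) / (5 * κ ^ 2 + 2) * Metric.infDist (Y n) (A ∩ B) ^ 2
        ≤ ε * (2 - ε) / (5 * κ ^ 2 + 2) * ((5 * κ ^ 2 + 2) * residual) := by gcongr; linarith
      _ = ε * (2 - ε) * residual := by field_simp
  rw [dist_eq_norm, dist_eq_norm]
  linarith

theorem exists_linear_rate [CompleteSpace X] (h : IsMARP A B lam mu a x b Y)
    (hAclosed : IsClosed A) (hA : Convex ℝ A) (hBclosed : IsClosed B) (hB : Convex ℝ B)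
    (hC : (A ∩ B).Nonempty) (hreg : IsBoundedlyLinearlyRegular A B) (hε : 0 < ε)
    (hlam : ∀ n, lam n ∈ Set.Icc ε (2 - ε)) (hmu : ∀ n, mu n ∈ Set.Icc ε (2 - ε)) :
    ∃ ρ : ℝ, ρ ∈ Set.Ioo (0 : ℝ) 1 ∧
      ∃ cbar ∈ A ∩ B, ∃ M : ℝ, 0 ≤ M ∧
        ∀ n : ℕ, max (‖x n - cbar‖) (‖Y (n + 1) - cbar‖) ≤ M * ρ ^ n := by
  obtain ⟨η, ⟨hη0, hη1⟩, hdecrease⟩ :=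
    h.exists_sq_dist_decrease hA hB hC hreg hε hlam hmu
  obtain ⟨w, hw, hYw⟩ := exists_mem_forall_dist_le_mul_pow hC (hAclosed.inter hBclosed)
    ⟨hη0, hη1.le⟩ hdecrease
  refine ⟨√(1 - η), ⟨Real.sqrt_pos.2 (sub_pos.2 hη1), (Real.sqrt_lt' one_pos).2 (by linarith)⟩,
    w, hw, 2 * Metric.infDist (Y 0) (A ∩ B), mul_nonneg two_pos.le Metric.infDist_nonneg,
    fun n => max_le ?_ ?_⟩
  · exact (h.norm_x_sub_le hA hε.le hlam n hw.1).trans (dist_eq_norm (Y n) w ▸ hYw n)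
  · have hmono := h.isFejerMonotone hA hB hε.le hlam hmu w hw n.le_succ
    exact (dist_eq_norm (Y (n + 1)) w).ge.trans (hmono.trans (hYw n))

end IsMARP

theorem mem_Icc_of_antitone_of_tendsto {u : ℕ → ℝ} {l ε : ℝ} (hu : Antitone u)
    (hlim : Tendsto u atTop (𝓝 l)) (hu1 : ∀ n, u n ≤ 1) (hε : ε ≤ l) (n : ℕ) :
    u n ∈ Set.Icc ε (2 - ε) := by
  have hεu (k : ℕ) : ε ≤ u k := hε.trans (hu.le_of_tendsto hlim k)
  exact ⟨hεu n, by linarith [hεu n, hu1 n]⟩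

theorem marp_two_convex_sets_general {X : Type*} [NormedAddCommGroup X] [InnerProductSpace ℝ X]
    [CompleteSpace X] {A B : Set X} (hAclosed : IsClosed A) (hA : Convex ℝ A)
    (hBclosed : IsClosed B) (hB : Convex ℝ B)
    (hri : (intrinsicInterior ℝ A ∩ intrinsicInterior ℝ B).Nonempty)
    (hspan : IsClosed (affineSpan ℝ (A ∪ B) : Set X)) {lam mu : ℕ → ℝ} {ε : ℝ} (hε : 0 < ε)
    (hlam : ∀ n, lam n ∈ Set.Icc ε (2 - ε)) (hmu : ∀ n, mu n ∈ Set.Icc ε (2 - ε))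
    {a x b Y : ℕ → X} (hMARP : IsMARP A B lam mu a x b Y) :
    ∃ ρ : ℝ, ρ ∈ Set.Ioo (0 : ℝ) 1 ∧
      ∃ cbar ∈ A ∩ B, ∃ M : ℝ, 0 ≤ M ∧
        ∀ n : ℕ, max (‖x n - cbar‖) (‖Y (n + 1) - cbar‖) ≤ M * ρ ^ n :=
  hMARP.exists_linear_rate hAclosed hA hBclosed hB
    (hri.mono (Set.inter_subset_inter intrinsicInterior_subset intrinsicInterior_subset))
    (isBoundedlyLinearlyRegular_of_intrinsicInterior_inter hAclosed hA hBclosed hB hri hspan)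
    hε hlam hmu

/-- Corollary 5.13 (two convex sets): the MARP converges linearly to a point of
the intersection. -/
theorem marp_two_convex_sets
    {X : Type*} [NormedAddCommGroup X] [InnerProductSpace ℝ X] [FiniteDimensional ℝ X]
    (A B : Set X) (hA : A.Nonempty) (hAclosed : IsClosed A) (hAconv : Convex ℝ A)
    (hB : B.Nonempty) (hBclosed : IsClosed B) (hBconv : Convex ℝ B)
    (hri : (intrinsicInterior ℝ A ∩ intrinsicInterior ℝ B).Nonempty)
    (S : Set X) (hS : S = (affineSpan ℝ (A ∪ B) : Set X))
    (lam mu : ℕ → ℝ) (hlam : ∀ n, lam n ∈ Set.Ioc (0 : ℝ) 1)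
    (hmu : ∀ n, mu n ∈ Set.Ioc (0 : ℝ) 1)
    (hlam_mono : ∀ n : ℕ, lam (n + 1) ≤ lam n) (hmu_mono : ∀ n : ℕ, mu (n + 1) ≤ mu n)
    (laminf muinf : ℝ)
    (hlaminf : Tendsto lam atTop (nhds laminf)) (hmuinf : Tendsto mu atTop (nhds muinf))
    (hα₀lt : max (lam 0) (mu 0) < 1) (hαinf : 0 < min laminf muinf)
    (a x b Y : ℕ → X) (hMARP : IsMARP A B lam mu a x b Y) (hstart : Y 0 ∈ S) :
    ∃ ρ : ℝ, ρ ∈ Set.Ioo (0 : ℝ) 1 ∧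
      ∃ cbar ∈ A ∩ B, ∃ M : ℝ, 0 ≤ M ∧
        ∀ n : ℕ, max (‖x n - cbar‖) (‖Y (n + 1) - cbar‖) ≤ M * ρ ^ n := by
  exact marp_two_convex_sets_general hAclosed hAconv hBclosed hBconv hri
    (AffineSubspace.closed_of_finiteDimensional _) hαinf
    (mem_Icc_of_antitone_of_tendsto (antitone_nat_of_succ_le hlam_mono) hlaminf
      (fun n => (hlam n).2) (min_le_left _ _))
    (mem_Icc_of_antitone_of_tendsto (antitone_nat_of_succ_le hmu_mono) hmuinf
      (fun n => (hmu n).2) (min_le_right _ _)) hMARP
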